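/- There is a universal constant C > 0 such that for every r0 ∈ (0, e^{-1}) and every x ∈ B, u_{r0}(x)^{-1} |∇ log((1/2) log u_{r0})(x)|² ≤ C (the gradient taken wherever u_{r0} is differentiable, i.e. everywhere on B, u_{r0} being C¹). -/

import Mathlib

open Real MeasureTheory Metric Set Filter Topology

/-- The conformal factor `h(x) = 1/(|x|² (log|x|)²)` of the hyperbolic cusp metric. -/
noncomputable def cuspH (x : EuclideanSpace ℝ (Fin 2)) : ℝ :=
  1 / (‖x‖^2 * (Real.log ‖x‖)^2)

/-- The `C¹` approximation `u_{r₀}` of the cusp: a cigar cap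
`ε(r₀)/(δ(r₀)+|x|²)` for `|x| ≤ r₀`, and the cusp `h` for `|x| > r₀`. -/
noncomputable def ucig (r0 : ℝ) (x : EuclideanSpace ℝ (Fin 2)) : ℝ :=
  if ‖x‖ ≤ r0 then
    (1 / ((-Real.log r0) * (-Real.log r0 - 1))) / (r0^2 / (-Real.log r0 - 1) + ‖x‖^2)
  else cuspH x

/-!
In the variable `t = ‖x‖²` the cusp is `h = 1/p(t)` with `p(t) = t (½ log t)²`, and the cigar cap is
exactly the reciprocal of the tangent line of `p` at `r₀²`. So `u = 1/q(‖x‖²)`, where `q` is `p`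
continued below `r₀²` by its tangent line; in particular `q`, hence `u`, is `C¹`. The chain rule
gives `u⁻¹ ‖∇ log (½ log u)‖² = 4 t q'² / (q (log q)²)`, so it suffices that `t q'² ≤ q (log q)²`.
This rests on `log p(t) = 2 (log s - s) ≤ min (-s) (-2)` with `s = -½ log t > 0`: on the cap
`q ≤ p(r₀²)`, `t q' ≤ q` and `q' = p'(r₀²) ≤ (log q)²`, while on the cusp `t q'² = q (s - 1)²`.
-/

/-- The function `f` on `[a, ∞)`, continued to the left of `a` by its tangent line at `a`. -/
noncomputable def tangentExtendLeft (f : ℝ → ℝ) (a t : ℝ) : ℝ :=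
  if t ≤ a then f a + deriv f a * (t - a) else f t

section TangentExtendLeft

variable {f : ℝ → ℝ} {a t : ℝ}

lemma tangentExtendLeft_of_le (h : t ≤ a) :
    tangentExtendLeft f a t = f a + deriv f a * (t - a) :=
  if_pos h

lemma tangentExtendLeft_of_ge (h : a ≤ t) : tangentExtendLeft f a t = f t := by
  rcases h.eq_or_lt with rfl | h
  · simp [tangentExtendLeft]
  · exact if_neg h.not_ge

lemma hasDerivAt_tangentExtendLeft (hf : DifferentiableAt ℝ f (max a t)) :
    HasDerivAt (tangentExtendLeft f a) (deriv f (max a t)) t := by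
  have line : HasDerivAt (fun s => f a + deriv f a * (s - a)) (deriv f a) t := by
    simpa using (((hasDerivAt_id t).sub_const a).const_mul (deriv f a)).const_add (f a)
  rcases lt_trichotomy t a with h | rfl | h
  · rw [max_eq_left h.le]
    refine line.congr_of_eventuallyEq ?_
    filter_upwards [Iio_mem_nhds h] with s hs using tangentExtendLeft_of_le hs.le
  · rw [max_self] at hf ⊢
    have left : HasDerivWithinAt (tangentExtendLeft f t) (deriv f t) (Iic t) t :=
      line.hasDerivWithinAt.congr_of_mem (fun _ hs => tangentExtendLeft_of_le hs) self_mem_Iic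
    have right : HasDerivWithinAt (tangentExtendLeft f t) (deriv f t) (Ici t) t :=
      hf.hasDerivAt.hasDerivWithinAt.congr_of_mem (fun _ hs => tangentExtendLeft_of_ge hs)
        self_mem_Ici
    simpa only [Iic_union_Ici, hasDerivWithinAt_univ] using left.union right
  · rw [max_eq_right h.le] at hf ⊢
    refine hf.hasDerivAt.congr_of_eventuallyEq ?_
    filter_upwards [Ioi_mem_nhds h] with s hs using tangentExtendLeft_of_ge hs.le

lemma tangentExtendLeft_le (hf : 0 ≤ deriv f a) : tangentExtendLeft f a t ≤ f (max a t) := by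
  rcases le_total t a with h | h
  · rw [tangentExtendLeft_of_le h, max_eq_left h]
    linarith [mul_nonpos_of_nonneg_of_nonpos hf (sub_nonpos.2 h)]
  · rw [tangentExtendLeft_of_ge h, max_eq_right h]

end TangentExtendLeft

/-- The reciprocal of the cusp factor `h` as a function of `t = |x|²`. -/
noncomputable def cuspProfile (t : ℝ) : ℝ :=
  t * (log t / 2) ^ 2

section CuspProfile

variable {a t : ℝ}

lemma hasDerivAt_cuspProfile (ht : t ≠ 0) :
    HasDerivAt cuspProfile (log t / 2 * (log t / 2 + 1)) t := by
  have h := (hasDerivAt_id t).mul (((hasDerivAt_log ht).div_const 2).pow 2)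
  refine h.congr_deriv ?_
  simp only [id, Pi.pow_apply]
  field_simp
  ring

lemma deriv_cuspProfile (ht : t ≠ 0) :
    deriv cuspProfile t = log t / 2 * (log t / 2 + 1) :=
  (hasDerivAt_cuspProfile ht).deriv

lemma log_half_le_neg_one (ha₀ : 0 < a) (ha : a ≤ exp (-2)) : log a / 2 ≤ -1 := by
  linarith [(log_le_iff_le_exp ha₀).2 ha]

lemma deriv_cuspProfile_nonneg (ha₀ : 0 < a) (ha : a ≤ exp (-2)) : 0 ≤ deriv cuspProfile a := by
  have hl := log_half_le_neg_one ha₀ ha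
  rw [deriv_cuspProfile ha₀.ne']
  exact mul_nonneg_of_nonpos_of_nonpos (by linarith) (by linarith)

lemma log_cuspProfile (ht₀ : 0 < t) (ht₁ : t < 1) :
    log (cuspProfile t) = 2 * (log (-(log t / 2)) + log t / 2) := by
  have hl : log t ≠ 0 := (log_neg ht₀ ht₁).ne
  rw [cuspProfile, log_mul ht₀.ne' (by positivity), log_pow, log_neg_eq_log]
  push_cast
  ring

lemma log_cuspProfile_le_neg_two (ht₀ : 0 < t) (ht₁ : t < 1) : log (cuspProfile t) ≤ -2 := by
  have hs : 0 < -(log t / 2) := by linarith [log_neg ht₀ ht₁]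
  linarith [log_cuspProfile ht₀ ht₁, log_le_sub_one_of_pos hs]

lemma log_cuspProfile_le_half_log (ht₀ : 0 < t) (ht₁ : t < 1) :
    log (cuspProfile t) ≤ log t / 2 := by
  have hs : 0 < -(log t / 2) := by linarith [log_neg ht₀ ht₁]
  have log_le_half : log (-(log t / 2)) ≤ -(log t / 2) / 2 := by
    have h := log_le_sub_one_of_pos (half_pos hs)
    rw [log_div hs.ne' two_ne_zero] at h
    linarith [log_two_lt_d9]
  linarith [log_cuspProfile ht₀ ht₁]

end CuspProfile

section CappedCuspProfile

variable {a t : ℝ}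

lemma deriv_mul_lt_tangentExtendLeft_cuspProfile (ha₀ : 0 < a) (ha₁ : a < 1) (h : t ≤ a) :
    deriv cuspProfile a * t < tangentExtendLeft cuspProfile a t := by
  have intercept : cuspProfile a - deriv cuspProfile a * a = -(a * log a / 2) := by
    rw [deriv_cuspProfile ha₀.ne', cuspProfile]
    ring
  rw [tangentExtendLeft_of_le h]
  linarith [mul_neg_of_pos_of_neg ha₀ (log_neg ha₀ ha₁)]

lemma tangentExtendLeft_cuspProfile_pos (ha₀ : 0 < a) (ha : a ≤ exp (-2)) (ht₀ : 0 ≤ t)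
    (ht₁ : t < 1) : 0 < tangentExtendLeft cuspProfile a t := by
  rcases le_total t a with h | h
  · exact (mul_nonneg (deriv_cuspProfile_nonneg ha₀ ha) ht₀).trans_lt
      (deriv_mul_lt_tangentExtendLeft_cuspProfile ha₀ (ha.trans_lt (by simp)) h)
  · have ht : 0 < t := ha₀.trans_le h
    have hl : log t ≠ 0 := (log_neg ht ht₁).ne
    rw [tangentExtendLeft_of_ge h, cuspProfile]
    positivity

lemma log_tangentExtendLeft_cuspProfile_le (ha₀ : 0 < a) (ha : a ≤ exp (-2)) (ht₀ : 0 ≤ t)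
    (ht₁ : t < 1) :
    log (tangentExtendLeft cuspProfile a t) ≤ min (-2) (log (max a t) / 2) := by
  have hm₀ : 0 < max a t := lt_max_of_lt_left ha₀
  have hm₁ : max a t < 1 := max_lt (ha.trans_lt (by simp)) ht₁
  calc log (tangentExtendLeft cuspProfile a t)
      ≤ log (cuspProfile (max a t)) :=
        log_le_log (tangentExtendLeft_cuspProfile_pos ha₀ ha ht₀ ht₁)
          (tangentExtendLeft_le (deriv_cuspProfile_nonneg ha₀ ha))
    _ ≤ min (-2) (log (max a t) / 2) :=
        le_min (log_cuspProfile_le_neg_two hm₀ hm₁) (log_cuspProfile_le_half_log hm₀ hm₁)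

lemma mul_deriv_cuspProfile_sq_le (ha₀ : 0 < a) (ha : a ≤ exp (-2)) (ht₀ : 0 ≤ t) (ht₁ : t < 1) :
    t * deriv cuspProfile (max a t) ^ 2 ≤
      tangentExtendLeft cuspProfile a t * log (tangentExtendLeft cuspProfile a t) ^ 2 := by
  obtain ⟨log_le_neg_two, log_le_half⟩ :=
    le_min_iff.1 (log_tangentExtendLeft_cuspProfile_le ha₀ ha ht₀ ht₁)
  have hq := tangentExtendLeft_cuspProfile_pos ha₀ ha ht₀ ht₁
  set q := tangentExtendLeft cuspProfile a t with hq_def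
  rcases le_total t a with h | h
  · rw [max_eq_left h] at log_le_half ⊢
    have slope_nonneg : 0 ≤ deriv cuspProfile a := deriv_cuspProfile_nonneg ha₀ ha
    have slope_mul_le : deriv cuspProfile a * t ≤ q :=
      (deriv_mul_lt_tangentExtendLeft_cuspProfile ha₀ (ha.trans_lt (by simp)) h).le
    have slope_le : deriv cuspProfile a ≤ log q ^ 2 := by
      have hl := log_half_le_neg_one ha₀ ha
      rw [deriv_cuspProfile ha₀.ne']
      nlinarith
    calc t * deriv cuspProfile a ^ 2 = deriv cuspProfile a * t * deriv cuspProfile a := by ring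
      _ ≤ q * log q ^ 2 := by gcongr
  · rw [max_eq_right h] at log_le_half ⊢
    have hl : log t < 0 := log_neg (ha₀.trans_le h) ht₁
    have abs_le : |log t / 2 + 1| ≤ |log q| := by
      rw [abs_of_neg (a := log q) (by linarith)]
      exact abs_le.2 ⟨by linarith, by linarith⟩
    calc t * deriv cuspProfile t ^ 2 = q * (log t / 2 + 1) ^ 2 := by
          rw [hq_def, tangentExtendLeft_of_ge h, deriv_cuspProfile (ha₀.trans_le h).ne',
            cuspProfile]
          ring
      _ ≤ q * log q ^ 2 := by gcongr ?_ * ?_; exact sq_le_sq.2 abs_le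

end CappedCuspProfile

section RadialGradient

variable {E : Type*} [NormedAddCommGroup E] [InnerProductSpace ℝ E] [CompleteSpace E]

lemma hasGradientAt_comp_norm_sq {g : ℝ → ℝ} {g' : ℝ} {x : E}
    (hg : HasDerivAt g g' (‖x‖ ^ 2)) :
    HasGradientAt (fun y => g (‖y‖ ^ 2)) ((2 * g') • x) x := by
  rw [hasGradientAt_iff_hasFDerivAt]
  refine (hg.comp_hasFDerivAt x (hasStrictFDerivAt_norm_sq x).hasFDerivAt).congr_fderiv ?_
  ext y
  simp only [smul_apply, coe_innerSL_apply, nsmul_eq_mul, Nat.cast_ofNat, smul_eq_mul, map_smul,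
    InnerProductSpace.toDual_apply_apply]
  ring

lemma hasDerivAt_log_half_log_inv {q : ℝ → ℝ} {q' t : ℝ} (hq : HasDerivAt q q' t)
    (hlog : log (q t) ≠ 0) :
    HasDerivAt (fun s => log (1 / 2 * log (q s)⁻¹)) (q' / (q t * log (q t))) t := by
  have hq₀ : q t ≠ 0 := fun h => hlog (by rw [h, log_zero])
  simp only [log_inv]
  refine (((hq.log hq₀).fun_neg.const_mul (1 / 2)).log (by simpa using hlog)).congr_deriv ?_
  field_simp

lemma hasGradientAt_log_half_log_inv_norm_sq {q : ℝ → ℝ} {q' : ℝ} {x : E}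
    (hq : HasDerivAt q q' (‖x‖ ^ 2)) (hlog : log (q (‖x‖ ^ 2)) ≠ 0) :
    HasGradientAt (fun y => log (1 / 2 * log (q (‖y‖ ^ 2))⁻¹))
      ((2 * (q' / (q (‖x‖ ^ 2) * log (q (‖x‖ ^ 2))))) • x) x :=
  hasGradientAt_comp_norm_sq (hasDerivAt_log_half_log_inv hq hlog)

lemma mul_norm_gradient_log_half_log_inv_sq {q : ℝ → ℝ} {q' : ℝ} {x : E}
    (hq : HasDerivAt q q' (‖x‖ ^ 2)) (hlog : log (q (‖x‖ ^ 2)) ≠ 0) :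
    q (‖x‖ ^ 2) * ‖gradient (fun y : E => log (1 / 2 * log (q (‖y‖ ^ 2))⁻¹)) x‖ ^ 2 =
      4 * (‖x‖ ^ 2 * q' ^ 2 / (q (‖x‖ ^ 2) * log (q (‖x‖ ^ 2)) ^ 2)) := by
  have hq₀ : q (‖x‖ ^ 2) ≠ 0 := fun h => hlog (by rw [h, log_zero])
  rw [(hasGradientAt_log_half_log_inv_norm_sq hq hlog).gradient, norm_smul, mul_pow, norm_eq_abs,
    sq_abs]
  field_simp
  ring

end RadialGradient

section CappedCusp

variable {E : Type*} [NormedAddCommGroup E] [InnerProductSpace ℝ E]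

/-- The approximation `u_{r₀}` of the cusp, on an arbitrary inner product space. -/
noncomputable def cappedCusp (r0 : ℝ) (x : E) : ℝ :=
  (tangentExtendLeft cuspProfile (r0 ^ 2) (‖x‖ ^ 2))⁻¹

theorem ucig_gradient_bound_general [CompleteSpace E] {r0 : ℝ} (h0 : 0 < r0) (h1 : r0 ≤ exp (-1))
    {x : E} (hx : x ∈ ball 0 1) :
    DifferentiableAt ℝ (fun y => log ((1/2) * log (cappedCusp r0 y))) x ∧
      (cappedCusp r0 x)⁻¹ * ‖gradient (fun y => log ((1/2) * log (cappedCusp r0 y))) x‖^2 ≤ 4 := by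
  have ha₀ : 0 < r0 ^ 2 := by positivity
  have ha : r0 ^ 2 ≤ exp (-2) := by
    calc r0 ^ 2 ≤ exp (-1) ^ 2 := by gcongr
      _ = exp (-2) := by rw [← exp_nat_mul]; norm_num
  have ht₀ : 0 ≤ ‖x‖ ^ 2 := sq_nonneg _
  have ht₁ : ‖x‖ ^ 2 < 1 := pow_lt_one₀ (norm_nonneg x) (mem_ball_zero_iff.1 hx) two_ne_zero
  have hderiv := hasDerivAt_tangentExtendLeft
    (hasDerivAt_cuspProfile (lt_max_of_lt_left ha₀ : 0 < max _ (‖x‖ ^ 2)).ne').differentiableAt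
  have hlog : log (tangentExtendLeft cuspProfile (r0 ^ 2) (‖x‖ ^ 2)) ≠ 0 := by
    linarith [(le_min_iff.1 (log_tangentExtendLeft_cuspProfile_le ha₀ ha ht₀ ht₁)).1]
  refine ⟨(hasGradientAt_log_half_log_inv_norm_sq hderiv hlog).differentiableAt, ?_⟩
  simp only [cappedCusp]
  rw [inv_inv, mul_norm_gradient_log_half_log_inv_sq hderiv hlog]
  have hq := tangentExtendLeft_cuspProfile_pos ha₀ ha ht₀ ht₁
  linarith [div_le_one_of_le₀ (mul_deriv_cuspProfile_sq_le ha₀ ha ht₀ ht₁) (by positivity)]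

end CappedCusp

lemma ucig_eq_cappedCusp {r0 : ℝ} (h0 : 0 < r0) (h1 : r0 < exp (-1)) :
    ucig r0 = cappedCusp r0 := by
  have half_log_sq (r : ℝ) : log (r ^ 2) / 2 = log r := by
    rw [log_pow]
    push_cast
    ring
  funext x
  rcases le_or_gt ‖x‖ r0 with h | h
  · have hL : log r0 < -1 := (log_lt_iff_lt_exp h0).2 h1
    have hL₁ : -log r0 - 1 ≠ 0 := by linarith
    rw [ucig, if_pos h, cappedCusp, tangentExtendLeft_of_le (by gcongr),
      deriv_cuspProfile (by positivity), cuspProfile, half_log_sq, div_div, one_div]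
    congr 1
    field_simp
    ring
  · rw [ucig, if_neg h.not_ge, cuspH, cappedCusp, tangentExtendLeft_of_ge (by gcongr), cuspProfile,
      half_log_sq, one_div]

/-- **Uniform gradient bound for the approximations.** There is a universal `C > 0`
such that for every `r₀ ∈ (0, e⁻¹)` and every `x ∈ B`,
`u_{r₀}⁻¹ |∇ log((1/2) log u_{r₀})|² ≤ C`. -/
theorem ucig_gradient_bound :
    ∃ C : ℝ, 0 < C ∧ ∀ r0 : ℝ, 0 < r0 → r0 < exp (-1) →
      ∀ x ∈ ball (0 : EuclideanSpace ℝ (Fin 2)) 1,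
        (ucig r0 x)⁻¹ * ‖gradient (fun y => log ((1/2) * log (ucig r0 y))) x‖^2 ≤ C := by
  refine ⟨4, by norm_num, fun r0 h0 h1 x hx => ?_⟩
  simpa only [ucig_eq_cappedCusp h0 h1] using (ucig_gradient_bound_general h0 h1.le hx).2
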